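/- For n ≥ 2, the sum over all permutations π of {1,…,n} of the number of order ideals of the inversion poset IP_π equals (n+1)^{n−1}. -/

import Mathlib

/-!
The pairs (word `π`, order ideal of `IP_π`) label the regions of the Shi arrangement, and they are
counted through parking functions, along the bijection of Athanasiadis and Linusson.

An ideal is determined by the antichain of its maximal elements. Drawn as arcs `i — j` on the
positions, these form a nonnesting partition of the positions along whose blocks the letters
decrease. Sending each label to the first position of the block containing it gives a parking
function. Conversely a parking function is read off from left to right with a first-in-first-out
queue: position `p` either starts a new block (if `p` is a value of the function), or continues the
block waiting at the head of the queue; each time the largest remaining label of the block is placed.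

The bijection is carried out one position at a time. `AC π p s` collects the antichains whose arcs
end at `p` or later and begin at `s` or later, and `PF π p s` the parking functions compatible with
a queue run that has placed the first `p` letters of `π`. The recursions `card_AC_succ` and
`card_PF_succ` match, which gives `sum_card_AC`: the required sum is the number of parking functions.

Finally, exactly one of the `n + 1` cyclic shifts of any function `Fin n → Fin (n + 1)` is a parking
function (`existsUnique_parking_sub`, Pollak's argument), so there are `(n + 1) ^ (n - 1)` of them.
-/

/-- The set of inversions of a permutation `π`: pairs of positions `(i, j)` with
`i < j` and `π i > π j`. -/
def inversions (n : ℕ) (π : Equiv.Perm (Fin n)) : Set (Fin n × Fin n) :=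
  {p | p.1 < p.2 ∧ π p.2 < π p.1}

/-- An order ideal of the inversion poset `IP_π`, where the partial order is
`(i, j) ≤ (a, b)` iff `a ≤ i` and `j ≤ b`. -/
def IsInvIdeal (n : ℕ) (π : Equiv.Perm (Fin n)) (I : Set (Fin n × Fin n)) : Prop :=
  I ⊆ inversions n π ∧
    ∀ y ∈ I, ∀ x ∈ inversions n π, y.1 ≤ x.1 → x.2 ≤ y.2 → x ∈ I

open Finset

namespace ShiCount

variable {n : ℕ}

/-- Parking functions on `n` cars, with spots numbered from `0`. The codomain is `Fin (n + 1)` so that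
cyclic shifts are available; the condition for `k = n` excludes the value `n`. -/
def Parking (f : Fin n → Fin (n + 1)) : Prop :=
  ∀ k ≤ n, k ≤ #{x | (f x).val < k}

open Classical in
/-- The states of the queue process after the letters `π 0, …, π (p - 1)` have been placed: parking
functions that send each placed label to its position, and each other label `x` either to the
position `v < p` of the last placed letter of its block, where `v ≥ s` and `x < π v`, or to the
position `≥ p` at which its block will start. -/
noncomputable def PF (π : Equiv.Perm (Fin n)) (p s : ℕ) : Finset (Fin n → Fin (n + 1)) :=
  {f | Parking f ∧ (∀ r : Fin n, r.val < p → (f (π r)).val = r.val) ∧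
    ∀ x, (∀ r : Fin n, r.val < p → x ≠ π r) →
      s ≤ (f x).val ∧ ∀ v : Fin n, v.val < p → (f x).val = v.val → x < π v}

open Classical in
/-- The antichains of inversions `(i, j)` of `π` with `s ≤ i` and `p ≤ j`. -/
noncomputable def AC (π : Equiv.Perm (Fin n)) (p s : ℕ) : Finset (Finset (Fin n × Fin n)) :=
  {A | (∀ a ∈ A, a.1 < a.2 ∧ π a.2 < π a.1 ∧ s ≤ a.1.val ∧ p ≤ a.2.val) ∧
    ∀ a ∈ A, ∀ b ∈ A, a ≠ b → ¬ (b.1 ≤ a.1 ∧ a.2 ≤ b.2)}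

lemma mem_PF {π : Equiv.Perm (Fin n)} {p s : ℕ} {f : Fin n → Fin (n + 1)} :
    f ∈ PF π p s ↔ Parking f ∧ (∀ r : Fin n, r.val < p → (f (π r)).val = r.val) ∧
    ∀ x, (∀ r : Fin n, r.val < p → x ≠ π r) →
      s ≤ (f x).val ∧ ∀ v : Fin n, v.val < p → (f x).val = v.val → x < π v := by
  simp [PF]

lemma mem_AC {π : Equiv.Perm (Fin n)} {p s : ℕ} {A : Finset (Fin n × Fin n)} :
    A ∈ AC π p s ↔ (∀ a ∈ A, a.1 < a.2 ∧ π a.2 < π a.1 ∧ s ≤ a.1.val ∧ p ≤ a.2.val) ∧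
    ∀ a ∈ A, ∀ b ∈ A, a ≠ b → ¬ (b.1 ≤ a.1 ∧ a.2 ≤ b.2) := by
  simp [AC]

/-! ### Ideals and antichains -/

lemma ncard_ideals (π : Equiv.Perm (Fin n)) :
    Set.ncard {I : Set (Fin n × Fin n) | IsInvIdeal n π I} = #(AC π 0 0) := by
  classical
  rw [← Set.ncard_coe_finset]
  symm
  refine Set.ncard_congr
    (fun A _ => {x | x ∈ inversions n π ∧ ∃ a ∈ A, a.1 ≤ x.1 ∧ x.2 ≤ a.2}) ?_ ?_ ?_
  · intro A hA
    refine ⟨fun x hx => hx.1, ?_⟩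
    rintro y ⟨hy, a, ha, h1, h2⟩ x hx h3 h4
    exact ⟨hx, a, ha, h1.trans h3, h4.trans h2⟩
  · -- an antichain consists of the maximal elements of the ideal it generates
    have key : ∀ A B : Finset (Fin n × Fin n), A ∈ AC π 0 0 → B ∈ AC π 0 0 →
        {x | x ∈ inversions n π ∧ ∃ a ∈ A, a.1 ≤ x.1 ∧ x.2 ≤ a.2} =
        {x | x ∈ inversions n π ∧ ∃ a ∈ B, a.1 ≤ x.1 ∧ x.2 ≤ a.2} → A ⊆ B := by
      intro A B hA hB h x hx
      rw [mem_AC] at hA hB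
      have hxA := hA.1 x hx
      have hx' : x ∈ {x | x ∈ inversions n π ∧ ∃ a ∈ A, a.1 ≤ x.1 ∧ x.2 ≤ a.2} :=
        ⟨⟨hxA.1, hxA.2.1⟩, x, hx, le_rfl, le_rfl⟩
      rw [h] at hx'
      obtain ⟨_, b, hb, h1, h2⟩ := hx'
      have hbB := hB.1 b hb
      have hb' : b ∈ {x | x ∈ inversions n π ∧ ∃ a ∈ B, a.1 ≤ x.1 ∧ x.2 ≤ a.2} :=
        ⟨⟨hbB.1, hbB.2.1⟩, b, hb, le_rfl, le_rfl⟩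
      rw [← h] at hb'
      obtain ⟨_, c, hc, h3, h4⟩ := hb'
      have hxc : x = c := by
        by_contra hne
        exact hA.2 x hx c hc hne ⟨h3.trans h1, h2.trans h4⟩
      subst hxc
      have : x = b := Prod.ext (le_antisymm h3 h1) (le_antisymm h2 h4)
      exact this ▸ hb
    intro A B hA hB h
    exact (key A B hA hB h).antisymm (key B A hB hA h.symm)
  · intro I hI
    let A : Finset (Fin n × Fin n) :=
      {x | x ∈ I ∧ ∀ y ∈ I, y.1 ≤ x.1 → x.2 ≤ y.2 → y = x}
    have hmA : ∀ x, x ∈ A ↔ x ∈ I ∧ ∀ y ∈ I, y.1 ≤ x.1 → x.2 ≤ y.2 → y = x := by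
      intro x; simp [A]
    refine ⟨A, ?_, ?_⟩
    · rw [mem_coe, mem_AC]
      refine ⟨fun a ha => ?_, fun a ha b hb hne hab => ?_⟩
      · have := hI.1 ((hmA a).1 ha).1
        exact ⟨this.1, this.2, Nat.zero_le _, Nat.zero_le _⟩
      · exact hne (((hmA a).1 ha).2 b ((hmA b).1 hb).1 hab.1 hab.2).symm
    · ext x
      constructor
      · rintro ⟨hx, a, ha, h1, h2⟩
        exact hI.2 a ((hmA a).1 ha).1 x hx h1 h2
      · intro hx
        refine ⟨hI.1 hx, ?_⟩
        -- an element above `x` of the largest length `a.2 - a.1` is maximal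
        obtain ⟨a, ha, hmax⟩ := Finset.exists_max_image
          ({a | a ∈ I ∧ a.1 ≤ x.1 ∧ x.2 ≤ a.2} : Finset (Fin n × Fin n))
          (fun a => (a.2.val : ℤ) - a.1.val) ⟨x, by simp [hx]⟩
        simp only [mem_filter, mem_univ, true_and] at ha hmax
        refine ⟨a, (hmA a).2 ⟨ha.1, ?_⟩, ha.2.1, ha.2.2⟩
        intro y hy h1 h2
        have := hmax y ⟨hy, h1.trans ha.2.1, ha.2.2.trans h2⟩
        rw [Fin.le_def] at h1 h2
        exact Prod.ext (Fin.ext (by omega)) (Fin.ext (by omega))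

/-- Either no arc of the antichain ends at `p`, or exactly one does, say `(v, p)`, and all other arcs
then begin after `v` and end after `p`. -/
lemma card_AC_succ (π : Equiv.Perm (Fin n)) (p : Fin n) (s : ℕ) :
    #(AC π p s) = #(AC π (p + 1) s) +
      ∑ v : Fin n with s ≤ v.val ∧ v < p ∧ π p < π v, #(AC π (p + 1) (v + 1)) := by
  classical
  rw [← Finset.card_filter_add_card_filter_not (s := AC π p s) (fun A => ∀ a ∈ A, a.2 ≠ p)]
  congr 1
  · congr 1
    ext A
    simp only [mem_filter, mem_AC]
    constructor
    · rintro ⟨⟨h1, h2⟩, h3⟩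
      refine ⟨fun a ha => ⟨(h1 a ha).1, (h1 a ha).2.1, (h1 a ha).2.2.1, ?_⟩, h2⟩
      have := (h1 a ha).2.2.2
      have h4 := h3 a ha
      rw [Ne, Fin.ext_iff] at h4
      omega
    · rintro ⟨h1, h2⟩
      refine ⟨⟨fun a ha => ⟨(h1 a ha).1, (h1 a ha).2.1, (h1 a ha).2.2.1, ?_⟩, h2⟩, ?_⟩
      · have := (h1 a ha).2.2.2
        omega
      · rintro a ha rfl
        have := (h1 a ha).2.2.2
        omega
  · rw [← Finset.card_sigma]
    symm
    have hnot : ∀ (v w : Fin n) (A : Finset (Fin n × Fin n)),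
        A ∈ AC π (p + 1) (v + 1) → (w, p) ∉ A := by
      intro v w A hA h
      have := ((mem_AC.1 hA).1 _ h).2.2.2
      simp at this
    refine Finset.card_bij (fun x _ => insert (x.1, p) x.2) ?_ ?_ ?_
    · rintro ⟨v, A⟩ h
      simp only [mem_sigma, mem_filter, mem_univ, true_and] at h
      obtain ⟨⟨hs, hv, hπ⟩, hA⟩ := h
      have hA' := mem_AC.1 hA
      simp only [mem_filter, mem_AC]
      refine ⟨⟨?_, ?_⟩, ?_⟩
      · intro a ha
        rcases mem_insert.1 ha with rfl | ha
        · exact ⟨hv, hπ, hs, le_rfl⟩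
        · have := hA'.1 a ha
          exact ⟨this.1, this.2.1, by omega, by omega⟩
      · intro a ha b hb hne hab
        rw [Fin.le_def, Fin.le_def] at hab
        rcases mem_insert.1 ha with rfl | ha <;> rcases mem_insert.1 hb with rfl | hb
        · exact hne rfl
        · have := hA'.1 b hb
          simp only at hab
          omega
        · have := hA'.1 a ha
          simp only at hab
          omega
        · exact hA'.2 a ha b hb hne hab
      · intro h
        exact h (v, p) (mem_insert_self _ _) rfl
    · rintro ⟨v, A⟩ h ⟨w, B⟩ h' heq
      simp only [mem_sigma] at h h'
      simp only at heq
      have hvw : v = w := by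
        have : (v, p) ∈ insert (w, p) B := heq ▸ mem_insert_self _ _
        rcases mem_insert.1 this with h1 | h1
        · exact (Prod.ext_iff.1 h1).1
        · exact absurd h1 (hnot _ _ _ h'.2)
      subst hvw
      have : A = B := by
        rw [← Finset.erase_insert (hnot v v A h.2), heq, Finset.erase_insert (hnot v v B h'.2)]
      rw [this]
    · intro A hA
      simp only [mem_filter, mem_AC] at hA
      obtain ⟨⟨h1, h2⟩, h3⟩ := hA
      push Not at h3
      obtain ⟨⟨v, p'⟩, hvA, hp⟩ := h3
      simp only at hp
      subst hp
      have hv := h1 _ hvA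
      refine ⟨⟨v, A.erase (v, p')⟩, ?_, Finset.insert_erase hvA⟩
      simp only [mem_sigma, mem_filter, mem_univ, true_and, mem_AC]
      refine ⟨⟨hv.2.2.1, hv.1, hv.2.1⟩, ?_, ?_⟩
      · intro a ha
        obtain ⟨hne, haA⟩ := mem_erase.1 ha
        have ha1 := h1 a haA
        have hab := h2 a haA _ hvA hne
        have hba := h2 _ hvA a haA hne.symm
        simp only [Fin.le_def] at hab hba ha1
        exact ⟨ha1.1, ha1.2.1, by omega, by omega⟩
      · intro a ha b hb
        exact h2 a (mem_of_mem_erase ha) b (mem_of_mem_erase hb)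

/-! ### Recursion for parking functions -/

/-- The word `π * swap p q` agrees with `π` before position `p` and has the label `π q` at position
`p`; membership in its `PF` at stage `p + 1`, in terms of `π` and `q`. -/
lemma mem_PF_swap {π : Equiv.Perm (Fin n)} {p q : Fin n} (hpq : p ≤ q) {s : ℕ}
    {f : Fin n → Fin (n + 1)} :
    f ∈ PF (π * Equiv.swap p q) (p + 1) s ↔ Parking f ∧
    (∀ r : Fin n, r < p → (f (π r)).val = r.val) ∧ (f (π q)).val = p.val ∧
    ∀ x, (∀ r : Fin n, r < p → x ≠ π r) → x ≠ π q →
      s ≤ (f x).val ∧ (∀ v : Fin n, v < p → (f x).val = v.val → x < π v) ∧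
      ((f x).val = p.val → x < π q) := by
  have hlt : ∀ r : Fin n, r < p → (π * Equiv.swap p q) r = π r := by
    intro r hr
    rw [Equiv.Perm.mul_apply, Equiv.swap_apply_of_ne_of_ne hr.ne (hr.trans_le hpq).ne]
  have hp : (π * Equiv.swap p q) p = π q := by
    rw [Equiv.Perm.mul_apply, Equiv.swap_apply_left]
  -- quantification over `r < p + 1` splits off the case `r = p`
  have split : ∀ P : Fin n → Prop,
      (∀ r : Fin n, r.val < p.val + 1 → P r) ↔ (∀ r : Fin n, r < p → P r) ∧ P p := by
    intro P
    refine ⟨fun h => ⟨fun r hr => h r (by omega), h p (by omega)⟩, fun h r hr => ?_⟩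
    rcases eq_or_ne r p with rfl | hne
    · exact h.2
    · exact h.1 r (by rw [Ne, Fin.ext_iff] at hne; rw [Fin.lt_def]; omega)
  rw [mem_PF]
  simp only [split, hp, and_imp, and_assoc]
  constructor
  · rintro ⟨h1, h2, h3, h4⟩
    refine ⟨h1, fun r hr => hlt r hr ▸ h2 r hr, h3, fun x hx hxq => ?_⟩
    obtain ⟨h5, h6, h7⟩ := h4 x (fun r hr => (hlt r hr).symm ▸ hx r hr) hxq
    exact ⟨h5, fun v hv hfv => hlt v hv ▸ h6 v hv hfv, h7⟩
  · rintro ⟨h1, h2, h3, h4⟩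
    refine ⟨h1, fun r hr => (hlt r hr).symm ▸ h2 r hr, h3, fun x hx hxq => ?_⟩
    obtain ⟨h5, h6, h7⟩ := h4 x (fun r hr => hlt r hr ▸ hx r hr) hxq
    exact ⟨h5, fun v hv hfv => (hlt v hv).symm ▸ h6 v hv hfv, h7⟩

lemma exists_eq_of_new {π : Equiv.Perm (Fin n)} {p x : Fin n}
    (hx : ∀ r : Fin n, r < p → x ≠ π r) : ∃ q, p ≤ q ∧ π q = x := by
  refine ⟨π.symm x, ?_, by simp⟩
  by_contra h
  exact hx _ (not_le.1 h) (by simp)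

lemma new_of_le (π : Equiv.Perm (Fin n)) {p q : Fin n} (hpq : p ≤ q) :
    ∀ r : Fin n, r < p → π q ≠ π r := by
  intro r hr h
  exact absurd (π.injective h) (hr.trans_le hpq).ne'

lemma le_card_of_prefix {π : Equiv.Perm (Fin n)} {k : ℕ} (hk : k ≤ n)
    {g : Fin n → Fin (n + 1)} (hg : ∀ r : Fin n, r.val < k → (g (π r)).val = r.val) :
    k ≤ #{x | (g x).val < k} := by
  classical
  calc k = #((univ.filter fun r : Fin n => r.val < k).image π) := by
        rw [Finset.card_image_of_injective _ π.injective, Fin.card_filter_val_lt]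
        omega
    _ ≤ _ := by
        refine Finset.card_le_card fun x hx => ?_
        simp only [mem_image, mem_filter, mem_univ, true_and] at hx ⊢
        obtain ⟨r, hr, rfl⟩ := hx
        rwa [hg r hr]

/-- The parking inequalities with `k ≤ p` are automatic once the labels at positions before `p` are
sent to their positions, so only those with `k > p` have to be carried over. -/
lemma Parking.transfer {π : Equiv.Perm (Fin n)} {p : Fin n} {f g : Fin n → Fin (n + 1)}
    (hf : Parking f) (hg : ∀ r : Fin n, r < p → (g (π r)).val = r.val)
    (hfg : ∀ k x, p.val < k → (f x).val < k → (g x).val < k) : Parking g := by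
  intro k hk
  rcases lt_or_ge p.val k with hpk | hpk
  · refine (hf k hk).trans (Finset.card_le_card fun x hx => ?_)
    simp only [mem_filter, mem_univ, true_and] at hx ⊢
    exact hfg k x hpk hx
  · exact le_card_of_prefix hk fun r hr => hg r (hr.trans_le hpk)

/-- The queue is never empty when it is needed: some label not placed before `p` has value at
most `p`, by the parking inequality for `k = p + 1`. -/
lemma exists_new_le {π : Equiv.Perm (Fin n)} {p : Fin n} {f : Fin n → Fin (n + 1)}
    (hf : Parking f) :
    ∃ x, (∀ r : Fin n, r < p → x ≠ π r) ∧ (f x).val ≤ p.val := by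
  classical
  by_contra! h
  have h1 := hf (p + 1) p.isLt
  have h2 : #(univ.filter fun x : Fin n => (f x).val < p.val + 1) ≤
      #((univ.filter fun r : Fin n => r.val < p.val).image π) := by
    refine Finset.card_le_card fun x hx => ?_
    simp only [mem_image, mem_filter, mem_univ, true_and] at hx ⊢
    by_contra! h3
    have := h x (fun r hr => (h3 r hr).symm)
    omega
  rw [Finset.card_image_of_injective _ π.injective, Fin.card_filter_val_lt] at h2
  omega

/-- If `p` is a value of `f`, a new block starts at position `p`, and the label placed there is the
largest one in the fibre of `p`; the function itself does not change. -/
lemma card_PF_new (π : Equiv.Perm (Fin n)) (p : Fin n) (s : ℕ) (hs : s ≤ p) :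
    #{f ∈ PF π p s | ∃ x, (f x).val = p.val} =
      ∑ q : Fin n with p ≤ q, #(PF (π * Equiv.swap p q) (p + 1) s) := by
  classical
  rw [← Finset.card_biUnion]
  · congr 1
    ext f
    simp only [mem_filter, mem_biUnion, mem_univ, true_and]
    constructor
    · rintro ⟨hf, x, hx⟩
      obtain ⟨h1, h2, h3⟩ := mem_PF.1 hf
      obtain ⟨y, hy, hmax⟩ := Finset.exists_max_image
        (univ.filter fun x : Fin n => (f x).val = p.val) id ⟨x, by simpa using hx⟩
      simp only [mem_filter, mem_univ, true_and, id] at hy hmax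
      obtain ⟨q, hpq, rfl⟩ := exists_eq_of_new (π := π) (p := p) (x := y) (by
        rintro r hr rfl
        have := h2 r hr
        rw [Fin.lt_def] at hr
        omega)
      refine ⟨q, hpq, (mem_PF_swap hpq).2 ⟨h1, h2, hy, fun x hx hne => ?_⟩⟩
      exact ⟨(h3 x hx).1, (h3 x hx).2, fun h => lt_of_le_of_ne (hmax x h) hne⟩
    · rintro ⟨q, hpq, hf⟩
      obtain ⟨h1, h2, h3, h4⟩ := (mem_PF_swap hpq).1 hf
      refine ⟨mem_PF.2 ⟨h1, h2, fun x hx => ?_⟩, π q, h3⟩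
      rcases eq_or_ne x (π q) with rfl | hne
      · exact ⟨by omega, fun v hv h => by omega⟩
      · exact ⟨(h4 x hx hne).1, (h4 x hx hne).2.1⟩
  · intro q hq q' hq' hne
    simp only [coe_filter, mem_univ, true_and, Set.mem_ofPred_eq] at hq hq'
    refine Finset.disjoint_left.2 fun f hf hf' => ?_
    obtain ⟨-, -, h3, h4⟩ := (mem_PF_swap hq).1 hf
    obtain ⟨-, -, h3', h4'⟩ := (mem_PF_swap hq').1 hf'
    have hne' : π q ≠ π q' := fun h => hne (π.injective h)
    exact lt_asymm ((h4 _ (new_of_le π hq') hne'.symm).2.2 h3')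
      ((h4' _ (new_of_le π hq) hne').2.2 h3)

/-- Redirects to `v` every label that `g` sends to `p`. Undoes the step of the queue process that
extends the block at the head `v` of the queue: after that step the rest of the block waits at `p`. -/
def merge (p v : Fin n) (g : Fin n → Fin (n + 1)) : Fin n → Fin (n + 1) :=
  fun x => if (g x).val = p.val then v.castSucc else g x

lemma merge_val (p v : Fin n) (g : Fin n → Fin (n + 1)) (x : Fin n) :
    (merge p v g x).val = if (g x).val = p.val then v.val else (g x).val := by
  unfold merge
  split_ifs <;> simp

/-- On the labels not placed before `p`, the smallest value of `merge p v g` is `v`, and the labels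
attaining it are those sent to `p` by `g`, the largest of which is `π q`. Hence `merge p v g`
determines `v`, `q` and `g`. -/
lemma merge_spec {π : Equiv.Perm (Fin n)} {p q v : Fin n} (hpq : p ≤ q) (hv : v < p)
    {g : Fin n → Fin (n + 1)}
    (hg : g ∈ PF (π * Equiv.swap p q) (p + 1) (v + 1)) (x : Fin n)
    (hx : ∀ r : Fin n, r < p → x ≠ π r) :
    v.val ≤ (merge p v g x).val ∧ ((merge p v g x).val = v.val ↔ (g x).val = p.val) ∧
    ((g x).val = p.val → x ≤ π q) := by
  obtain ⟨-, -, h3, h4⟩ := (mem_PF_swap hpq).1 hg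
  rw [merge_val]
  rw [Fin.lt_def] at hv
  rcases eq_or_ne x (π q) with rfl | hne
  · simp [h3]
  · obtain ⟨h5, h6, h7⟩ := h4 x hx hne
    split_ifs with h
    · simp [h, (h7 h).le]
    · exact ⟨by omega, by omega, fun h' => absurd h' h⟩

/-- If `p` is not a value of `f`, position `p` continues the block waiting at the smallest value `v`
among the labels not yet placed, and receives the largest label `π q` of that block. -/
lemma card_PF_old (π : Equiv.Perm (Fin n)) (p : Fin n) (s : ℕ) :
    #{f ∈ PF π p s | ¬ ∃ x, (f x).val = p.val} =
      ∑ q : Fin n with p ≤ q, ∑ v : Fin n with s ≤ v.val ∧ v < p ∧ π q < π v,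
        #(PF (π * Equiv.swap p q) (p + 1) (v + 1)) := by
  classical
  simp_rw [← Finset.card_sigma]
  symm
  refine Finset.card_bij (fun z _ => merge p z.2.1 z.2.2) ?_ ?_ ?_
  · rintro ⟨q, v, g⟩ h
    simp only [mem_sigma, mem_filter, mem_univ, true_and] at h
    obtain ⟨hpq, ⟨hs, hv, hπ⟩, hg⟩ := h
    obtain ⟨h1, h2, h3, h4⟩ := (mem_PF_swap hpq).1 hg
    have hv' := Fin.lt_def.1 hv
    have hpre : ∀ r : Fin n, r < p → (merge p v g (π r)).val = r.val := by
      intro r hr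
      rw [merge_val, h2 r hr, if_neg (by rw [Fin.lt_def] at hr; omega)]
    simp only [mem_filter, mem_PF]
    refine ⟨⟨h1.transfer hpre ?_, hpre, fun x hx => ⟨?_, fun u hu hxu => ?_⟩⟩, ?_⟩
    · intro k x hpk hk
      rw [merge_val]
      split_ifs <;> omega
    · exact hs.trans (merge_spec hpq hv hg x hx).1
    · rw [merge_val] at hxu
      split_ifs at hxu with h
      · rw [← Fin.ext hxu]
        exact ((merge_spec hpq hv hg x hx).2.2 h).trans_lt hπ
      · rcases eq_or_ne x (π q) with rfl | hne
        · exact absurd h3 h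
        · exact (h4 x hx hne).2.1 u hu hxu
    · rintro ⟨x, hx⟩
      rw [merge_val] at hx
      split_ifs at hx <;> omega
  · -- equality of `v` and of `q` follows from two inequalities each, symmetric in the two data
    have key : ∀ (q v q' v' : Fin n) (g g' : Fin n → Fin (n + 1)), p ≤ q → p ≤ q' →
        v < p → v' < p → g ∈ PF (π * Equiv.swap p q) (p + 1) (v + 1) →
        g' ∈ PF (π * Equiv.swap p q') (p + 1) (v' + 1) →
        merge p v g = merge p v' g' → v' ≤ v := by
      intro q v q' v' g g' hq hq' hv hv' hg hg' heq
      have h3 := ((mem_PF_swap hq).1 hg).2.2.1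
      have h5 := (merge_spec hq hv hg _ (new_of_le π hq)).2.1.2 h3
      have h6 := (merge_spec hq' hv' hg' _ (new_of_le π hq)).1
      rw [← heq, h5] at h6
      exact h6
    have key2 : ∀ (q v q' : Fin n) (g g' : Fin n → Fin (n + 1)), p ≤ q → p ≤ q' →
        v < p → g ∈ PF (π * Equiv.swap p q) (p + 1) (v + 1) →
        g' ∈ PF (π * Equiv.swap p q') (p + 1) (v + 1) →
        merge p v g = merge p v g' → π q ≤ π q' := by
      intro q v q' g g' hq hq' hv hg hg' heq
      have h3 := ((mem_PF_swap hq).1 hg).2.2.1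
      have h5 := (merge_spec hq hv hg _ (new_of_le π hq)).2.1.2 h3
      have h6 := merge_spec hq' hv hg' _ (new_of_le π hq)
      rw [heq] at h5
      exact h6.2.2 (h6.2.1.1 h5)
    rintro ⟨q, v, g⟩ h ⟨q', v', g'⟩ h' heq
    simp only [mem_sigma, mem_filter, mem_univ, true_and] at h h' heq
    obtain ⟨hq, ⟨-, hv, -⟩, hg⟩ := h
    obtain ⟨hq', ⟨-, hv', -⟩, hg'⟩ := h'
    obtain rfl : v = v' := le_antisymm (key q' v' q v g' g hq' hq hv' hv hg' hg heq.symm)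
      (key q v q' v' g g' hq hq' hv hv' hg hg' heq)
    obtain rfl : q = q' := π.injective (le_antisymm (key2 q v q' g g' hq hq' hv hg hg' heq)
      (key2 q' v q g' g hq' hq hv hg' hg heq.symm))
    have : g = g' := by
      funext x
      apply Fin.ext
      by_cases hx : ∀ r : Fin n, r < p → x ≠ π r
      · have h1 := (merge_spec hq hv hg x hx).2.1
        have h2 := (merge_spec hq hv hg' x hx).2.1
        rw [← heq, h1] at h2
        by_cases hgx : (g x).val = p.val
        · rw [hgx, h2.1 hgx]
        · have h3 := congrArg Fin.val (congrFun heq x)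
          rwa [merge_val, merge_val, if_neg hgx, if_neg (mt h2.2 hgx)] at h3
      · push Not at hx
        obtain ⟨r, hr, rfl⟩ := hx
        rw [((mem_PF_swap hq).1 hg).2.1 r hr, ((mem_PF_swap hq).1 hg').2.1 r hr]
    rw [this]
  · intro f hf
    simp only [mem_filter, not_exists] at hf
    obtain ⟨hf, hnp⟩ := hf
    obtain ⟨h1, h2, h3⟩ := mem_PF.1 hf
    obtain ⟨x₀, hx₀, hx₀p⟩ := exists_new_le (π := π) (p := p) h1
    obtain ⟨x₁, hx₁, hmin⟩ := Finset.exists_min_image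
      (univ.filter fun x : Fin n => ∀ r : Fin n, r < p → x ≠ π r) (fun x => (f x).val)
      ⟨x₀, by simpa using hx₀⟩
    simp only [mem_filter, mem_univ, true_and] at hx₁ hmin
    have hvp : (f x₁).val < p.val :=
      lt_of_le_of_ne ((hmin x₀ hx₀).trans hx₀p) (hnp x₁)
    obtain ⟨v, hv⟩ : ∃ v : Fin n, v.val = (f x₁).val := ⟨⟨_, hvp.trans p.isLt⟩, rfl⟩
    rw [← hv] at hvp hmin
    obtain ⟨y, hy, hmax⟩ := Finset.exists_max_image
      (univ.filter fun x : Fin n => (∀ r : Fin n, r < p → x ≠ π r) ∧ (f x).val = v.val) id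
      ⟨x₁, by simpa using ⟨hx₁, hv.symm⟩⟩
    simp only [mem_filter, mem_univ, true_and, id] at hy hmax
    obtain ⟨hynew, hyv⟩ := hy
    obtain ⟨q, hpq, rfl⟩ := exists_eq_of_new hynew
    let g : Fin n → Fin (n + 1) := fun x =>
      if (∀ r : Fin n, r < p → x ≠ π r) ∧ (f x).val = v.val then p.castSucc else f x
    have hgval : ∀ x, (g x).val =
        if (∀ r : Fin n, r < p → x ≠ π r) ∧ (f x).val = v.val then p.val else (f x).val := by
      intro x
      simp only [g]
      split_ifs <;> simp
    have hgpre : ∀ r : Fin n, r < p → (g (π r)).val = r.val := by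
      intro r hr
      rw [hgval, if_neg (fun h => h.1 r hr rfl), h2 r hr]
    refine ⟨⟨q, v, g⟩, ?_, ?_⟩
    · simp only [mem_sigma, mem_filter, mem_univ, true_and]
      refine ⟨hpq, ⟨?_, hvp, (h3 _ hynew).2 v hvp hyv⟩, (mem_PF_swap hpq).2
        ⟨h1.transfer hgpre ?_, hgpre, ?_, fun x hx hne => ?_⟩⟩
      · rw [hv]
        exact (h3 x₁ hx₁).1
      · intro k x hpk hk
        rw [hgval]
        split_ifs <;> omega
      · rw [hgval, if_pos ⟨hynew, hyv⟩]
      · have h4 := hmin x hx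
        have h5 := hnp x
        rw [hgval]
        split_ifs with h
        · exact ⟨by omega, fun u hu h => by omega,
            fun _ => lt_of_le_of_ne (hmax x h) hne⟩
        · have : (f x).val ≠ v.val := fun h' => h ⟨hx, h'⟩
          exact ⟨by omega, (h3 x hx).2, fun h' => absurd h' h5⟩
    · funext x
      apply Fin.ext
      simp only
      rw [merge_val, hgval]
      by_cases h : (∀ r : Fin n, r < p → x ≠ π r) ∧ (f x).val = v.val
      · rw [if_pos h, if_pos rfl, h.2]
      · rw [if_neg h, if_neg (hnp x)]

lemma card_PF_succ (π : Equiv.Perm (Fin n)) (p : Fin n) (s : ℕ) (hs : s ≤ p) :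
    #(PF π p s) = ∑ q : Fin n with p ≤ q, (#(PF (π * Equiv.swap p q) (p + 1) s) +
      ∑ v : Fin n with s ≤ v.val ∧ v < p ∧ π q < π v,
        #(PF (π * Equiv.swap p q) (p + 1) (v + 1))) := by
  classical
  rw [Finset.sum_add_distrib, ← card_PF_new π p s hs, ← card_PF_old,
    Finset.card_filter_add_card_filter_not]

/-! ### Comparison of the recursions -/

/-- Both sides satisfy the same recursion in `p`: summing over the words `σ` that begin with the first
`p` letters of `π`, the next letter `σ p = π q` is chosen, and then whether an arc ends at `p`. -/
lemma sum_card_AC (m : ℕ) : ∀ (p : ℕ), p + m = n → ∀ (π : Equiv.Perm (Fin n)) (s : ℕ), s ≤ p →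
    ∑ σ : Equiv.Perm (Fin n) with ∀ r : Fin n, r.val < p → σ r = π r, #(AC σ p s) =
      #(PF π p s) := by
  classical
  induction m with
  | zero =>
    intro p hp π s hs
    obtain rfl : p = n := hp
    have h1 : (univ.filter fun σ : Equiv.Perm (Fin p) =>
        ∀ r : Fin p, r.val < p → σ r = π r) = {π} := by
      ext σ
      simp only [mem_filter, mem_univ, true_and, mem_singleton]
      exact ⟨fun h => Equiv.ext fun r => h r r.isLt, fun h r _ => by rw [h]⟩
    have h2 : AC π p s = {∅} := by
      ext A
      simp only [mem_AC, mem_singleton]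
      constructor
      · rintro ⟨h, -⟩
        refine Finset.eq_empty_of_forall_notMem fun a ha => ?_
        have := (h a ha).2.2.2
        omega
      · rintro rfl
        simp
    have h3 : PF π p s = {fun x => (π.symm x).castSucc} := by
      ext f
      simp only [mem_PF, mem_singleton]
      constructor
      · rintro ⟨-, h, -⟩
        funext x
        apply Fin.ext
        simpa using h (π.symm x) (π.symm x).isLt
      · rintro rfl
        refine ⟨fun k hk => le_card_of_prefix (π := π) hk fun r _ => by simp,
          fun r _ => by simp, fun x hx => ?_⟩
        exact absurd (π.apply_symm_apply x).symm (hx (π.symm x) (Fin.isLt _))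
    rw [h1, Finset.sum_singleton, h2, h3, card_singleton, card_singleton]
  | succ m ih =>
    intro p hp π s hs
    obtain ⟨p, rfl⟩ : ∃ p' : Fin n, p'.val = p := ⟨⟨p, by omega⟩, rfl⟩
    rw [card_PF_succ π p s hs]
    simp_rw [card_AC_succ]
    have hfib : ∀ σ ∈ univ.filter (fun σ : Equiv.Perm (Fin n) =>
        ∀ r : Fin n, r.val < p.val → σ r = π r),
        π.symm (σ p) ∈ univ.filter (fun q : Fin n => p ≤ q) := by
      intro σ hσ
      simp only [mem_filter, mem_univ, true_and] at hσ ⊢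
      by_contra! h
      have h2 := hσ _ h
      rw [Equiv.apply_symm_apply] at h2
      exact h.ne (σ.injective h2)
    rw [← Finset.sum_fiberwise_of_maps_to hfib]
    refine Finset.sum_congr rfl fun q hq => ?_
    simp only [mem_filter, mem_univ, true_and] at hq
    have hset : ((univ.filter (fun σ : Equiv.Perm (Fin n) =>
        ∀ r : Fin n, r.val < p.val → σ r = π r)).filter (fun σ => π.symm (σ p) = q)) =
        univ.filter (fun σ : Equiv.Perm (Fin n) =>
          ∀ r : Fin n, r.val < p.val + 1 → σ r = (π * Equiv.swap p q) r) := by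
      ext σ
      simp only [mem_filter, mem_univ, true_and]
      simp only [Equiv.symm_apply_eq, Equiv.Perm.mul_apply]
      constructor
      · rintro ⟨h1, h2⟩ r hr
        rcases eq_or_ne r p with rfl | hne
        · rw [Equiv.swap_apply_left, h2]
        · have hrp : r < p := lt_of_le_of_ne (by rw [Fin.le_def]; omega) hne
          rw [Equiv.swap_apply_of_ne_of_ne hne (hrp.trans_le hq).ne]
          exact h1 r hrp
      · intro h
        refine ⟨fun r hr => ?_, ?_⟩
        · rw [h r (by omega), Equiv.swap_apply_of_ne_of_ne (Fin.lt_def.2 hr).ne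
            ((Fin.lt_def.2 hr).trans_le hq).ne]
        · rw [h p (by omega), Equiv.swap_apply_left]
    rw [hset, Finset.sum_add_distrib, ih (p + 1) (by omega) _ s (by omega)]
    congr 1
    have hinner : ∀ v ∈ univ.filter (fun v : Fin n => s ≤ v.val ∧ v < p ∧ π q < π v),
        #(PF (π * Equiv.swap p q) (p + 1) (v + 1)) =
        ∑ σ : Equiv.Perm (Fin n) with
          ∀ r : Fin n, r.val < p.val + 1 → σ r = (π * Equiv.swap p q) r,
          #(AC σ (p + 1) (v + 1)) := by
      intro v hv
      simp only [mem_filter, mem_univ, true_and, Fin.lt_def] at hv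
      rw [ih (p + 1) (by omega) _ (v + 1) (by omega)]
    rw [Finset.sum_congr rfl hinner, Finset.sum_comm]
    refine Finset.sum_congr rfl fun σ hσ => ?_
    rw [← hset] at hσ
    simp only [mem_filter, mem_univ, true_and, Equiv.symm_apply_eq] at hσ
    refine Finset.sum_congr ?_ fun _ _ => rfl
    ext v
    simp only [mem_filter, mem_univ, true_and]
    constructor
    · rintro ⟨h1, h2, h3⟩
      rw [hσ.2, hσ.1 v h2] at h3
      exact ⟨h1, h2, h3⟩
    · rintro ⟨h1, h2, h3⟩
      rw [hσ.2, hσ.1 v h2]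
      exact ⟨h1, h2, h3⟩

/-! ### Counting parking functions -/

/-- The number of values of `g` below `t`, minus `t`: the height at time `t` of the walk with steps
`#(g ⁻¹ {j}) - 1`. -/
def height (g : Fin n → Fin (n + 1)) (t : Fin (n + 1)) : ℤ :=
  (#{x | (g x).val < t.val} : ℤ) - t.val

lemma val_sub_eq (a t : Fin (n + 1)) :
    (a - t).val = if t.val ≤ a.val then a.val - t.val else a.val + (n + 1) - t.val := by
  have ha := a.isLt
  have ht := t.isLt
  rw [Fin.sub_def]
  simp only
  split_ifs with h
  · rw [show n + 1 - t.val + a.val = a.val - t.val + (n + 1) by omega, Nat.add_mod_right,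
      Nat.mod_eq_of_lt (by omega)]
  · rw [Nat.mod_eq_of_lt (by omega)]
    omega

lemma card_shift_of_le (g : Fin n → Fin (n + 1)) {t u : Fin (n + 1)} (h : t ≤ u) :
    #{x | (g x - t).val < u.val - t.val} + #{x | (g x).val < t.val} = #{x | (g x).val < u.val} := by
  rw [Fin.le_def] at h
  simp only [Finset.card_filter, ← Finset.sum_add_distrib]
  refine Finset.sum_congr rfl fun x _ => ?_
  rw [val_sub_eq]
  have := (g x).isLt
  have := u.isLt
  split_ifs <;> omega

lemma card_shift_of_lt (g : Fin n → Fin (n + 1)) {t u : Fin (n + 1)} (h : u < t) :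
    #{x | (g x - t).val < u.val + (n + 1) - t.val} + #{x | (g x).val < t.val} =
      n + #{x | (g x).val < u.val} := by
  rw [Fin.lt_def] at h
  have hn : n = ∑ _x : Fin n, 1 := by simp
  suffices h' : _ = ∑ _x : Fin n, 1 + #{x | (g x).val < u.val} by rwa [← hn] at h'
  simp only [Finset.card_filter, ← Finset.sum_add_distrib]
  refine Finset.sum_congr rfl fun x _ => ?_
  rw [val_sub_eq]
  have := (g x).isLt
  have := u.isLt
  split_ifs <;> omega

/-- The cyclic shift of `g` by `t` is parking iff `t` is the first time at which the height of `g` is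
minimal: the inequality for `k` compares the heights at `t` and at `t + k` modulo `n + 1`, and is
strict exactly when the sum wraps around. -/
lemma parking_sub_iff (g : Fin n → Fin (n + 1)) (t : Fin (n + 1)) :
    Parking (fun x => g x - t) ↔ ∀ u, toLex (height g t, t) ≤ toLex (height g u, u) := by
  have htn := t.isLt
  simp only [Prod.Lex.toLex_le_toLex]
  constructor
  · intro h u
    have hun := u.isLt
    rcases le_or_gt t u with htu | hut
    · have h1 := card_shift_of_le g htu
      have h2 : u.val - t.val ≤ #{x | (g x - t).val < u.val - t.val} := h _ (by omega)
      rw [Fin.le_def] at htu ⊢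
      simp only [height]
      omega
    · have h1 := card_shift_of_lt g hut
      rw [Fin.lt_def] at hut
      have h2 : u.val + (n + 1) - t.val ≤
          #{x | (g x - t).val < u.val + (n + 1) - t.val} := h _ (by omega)
      rw [Fin.le_def]
      simp only [height]
      omega
  · intro h k hk
    change k ≤ #{x | (g x - t).val < k}
    by_cases hc : t.val + k ≤ n
    · have h1 := card_shift_of_le g (t := t) (u := ⟨t.val + k, by omega⟩)
        (by rw [Fin.le_def]; simp)
      have h2 := h ⟨t.val + k, by omega⟩
      rw [Fin.le_def] at h2
      simp only [height, Nat.add_sub_cancel_left] at h1 h2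
      omega
    · have h1 := card_shift_of_lt g (t := t) (u := ⟨t.val + k - (n + 1), by omega⟩)
        (by rw [Fin.lt_def]; simp only; omega)
      have h2 := h ⟨t.val + k - (n + 1), by omega⟩
      rw [Fin.le_def] at h2
      simp only [height] at h1 h2
      rw [show t.val + k - (n + 1) + (n + 1) - t.val = k by omega] at h1
      omega

lemma existsUnique_parking_sub (g : Fin n → Fin (n + 1)) :
    ∃! t : Fin (n + 1), Parking (fun x => g x - t) := by
  obtain ⟨t, -, ht⟩ := Finset.exists_min_image univ
    (fun t : Fin (n + 1) => toLex (height g t, t)) ⟨0, mem_univ _⟩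
  refine ⟨t, (parking_sub_iff g t).2 fun u => ht u (mem_univ u), fun u hu => ?_⟩
  have h := le_antisymm ((parking_sub_iff g u).1 hu t) (ht u (mem_univ u))
  exact (Prod.ext_iff.1 (toLex.injective h)).2

open Classical in
/-- Double counting of the pairs `(t, g)` such that the shift of `g` by `t` is parking. -/
lemma card_parking :
    (n + 1) * #{f : Fin n → Fin (n + 1) | Parking f} = (n + 1) ^ n := by
  have h1 : ∀ t : Fin (n + 1), #{g : Fin n → Fin (n + 1) | Parking fun x => g x - t} =
      #{f : Fin n → Fin (n + 1) | Parking f} := by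
    intro t
    refine Finset.card_equiv (Equiv.subRight fun _ => t) fun g => ?_
    simp only [mem_filter, mem_univ, true_and]
    rfl
  have h2 : ∀ g : Fin n → Fin (n + 1), #{t : Fin (n + 1) | Parking fun x => g x - t} = 1 := by
    intro g
    obtain ⟨t, ht, huniq⟩ := existsUnique_parking_sub g
    rw [Finset.card_eq_one]
    refine ⟨t, ?_⟩
    ext u
    simp only [mem_filter, mem_univ, true_and, mem_singleton]
    exact ⟨huniq u, fun h => h ▸ ht⟩
  have h3 := Finset.sum_card_bipartiteAbove_eq_sum_card_bipartiteBelow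
    (s := (univ : Finset (Fin (n + 1)))) (t := (univ : Finset (Fin n → Fin (n + 1))))
    (fun t g => Parking fun x => g x - t)
  simp only [Finset.bipartiteAbove, Finset.bipartiteBelow, h1, h2] at h3
  simpa using h3

end ShiCount

/-- The sum over all permutations `π` of `{1, …, n}` of the number of order
ideals of the inversion poset `IP_π` equals `(n+1)^(n-1)`. -/
theorem sum_ideal_counts (n : ℕ) (hn : 2 ≤ n) :
    ∑ π : Equiv.Perm (Fin n),
        Set.ncard {I : Set (Fin n × Fin n) | IsInvIdeal n π I} =
      (n + 1) ^ (n - 1) := by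
  classical
  have h1 := ShiCount.sum_card_AC (n := n) n 0 (by omega) 1 0 le_rfl
  have h2 : ShiCount.PF (1 : Equiv.Perm (Fin n)) 0 0 =
      Finset.univ.filter fun f => ShiCount.Parking f := by
    ext f
    simp [ShiCount.mem_PF]
  simp only [Nat.not_lt_zero, false_imp_iff, implies_true, Finset.filter_true] at h1
  simp_rw [ShiCount.ncard_ideals]
  rw [h1, h2]
  have h3 := ShiCount.card_parking (n := n)
  obtain ⟨m, rfl⟩ : ∃ m, n = m + 1 := ⟨n - 1, by omega⟩
  rw [pow_succ'] at h3
  exact Nat.eq_of_mul_eq_mul_left (Nat.succ_pos _) h3
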